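/- Let l = 3 and m = 5, and consider the trivariate bicycle code with A = x + z⁴ and B = x + y² + z² (the weight-5 [[30,4,5]] code). Its Tanner graph has a spanning subgraph isomorphic to the Cayley graph of ZMod 10 × ZMod 6; that is, the code has a toric layout with μ = 5 and λ = 3. -/

import Mathlib

/-- The translation matrix `P(g)` over `𝔽₂`: `P(g)_{h,h'} = 1` iff `h = g + h'`. -/
def Pmat {G : Type*} [AddGroup G] [DecidableEq G] (g : G) : Matrix G G (ZMod 2) :=
  Matrix.of fun h h' => if h = g + h' then 1 else 0

/-- Vertex types of the Tanner graph: X-checks, Z-checks, L-data, R-data. -/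
inductive VType : Type
  | X | Z | L | R

/-- The Tanner graph of a two-block code with matrices `A`, `B`. -/
def TannerGraph {G : Type*} (A B : Matrix G G (ZMod 2)) :
    SimpleGraph (VType × G) :=
  SimpleGraph.fromRel fun u v =>
    (u.1 = VType.X ∧ v.1 = VType.L ∧ A u.2 v.2 = 1) ∨
    (u.1 = VType.X ∧ v.1 = VType.R ∧ B u.2 v.2 = 1) ∨
    (u.1 = VType.Z ∧ v.1 = VType.L ∧ B v.2 u.2 = 1) ∨
    (u.1 = VType.Z ∧ v.1 = VType.R ∧ A v.2 u.2 = 1)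

/-- The Cayley graph of `ZMod (2μ) × ZMod (2λ)`: distinct vertices `u`, `v` are
adjacent iff `u - v ∈ {(1,0), (-1,0), (0,1), (0,-1)}`. -/
def CayleyGraph (μ lam : ℕ) : SimpleGraph (ZMod (2 * μ) × ZMod (2 * lam)) :=
  SimpleGraph.fromRel fun u v =>
    u - v = (1, 0) ∨ u - v = (-1, 0) ∨ u - v = (0, 1) ∨ u - v = (0, -1)

/-- `x = P(1,0)` over `G = ZMod 3 × ZMod 5`. -/
def xP : Matrix (ZMod 3 × ZMod 5) (ZMod 3 × ZMod 5) (ZMod 2) := Pmat (1, 0)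

/-- `y = P(0,1)` over `G = ZMod 3 × ZMod 5`. -/
def yP : Matrix (ZMod 3 × ZMod 5) (ZMod 3 × ZMod 5) (ZMod 2) := Pmat (0, 1)

/-- `z = P(1,1)` over `G = ZMod 3 × ZMod 5`. -/
def zP : Matrix (ZMod 3 × ZMod 5) (ZMod 3 × ZMod 5) (ZMod 2) := Pmat (1, 1)

/-- `A = x + z⁴` of the weight-5 `[[30,4,5]]` code. -/
def Amat : Matrix (ZMod 3 × ZMod 5) (ZMod 3 × ZMod 5) (ZMod 2) := xP + zP ^ 4

/-- `B = x + y² + z²` of the weight-5 `[[30,4,5]]` code. -/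
def Bmat : Matrix (ZMod 3 × ZMod 5) (ZMod 3 × ZMod 5) (ZMod 2) := xP + yP ^ 2 + zP ^ 2

theorem Pmat_mul_aux (g h : ZMod 3 × ZMod 5) : Pmat g * Pmat h = Pmat (g + h) := by
  ext a b
  simp [Pmat, Matrix.mul_apply, add_assoc]

theorem Amat_aux : Amat = Pmat (1, 0) + Pmat (1, 4) := by
  have h : zP ^ 4 = Pmat (1, 4) := by
    simp only [zP, pow_succ, pow_zero, one_mul, Pmat_mul_aux]
    rfl
  rw [Amat, h, xP]

theorem Bmat_aux : Bmat = Pmat (1, 0) + Pmat (0, 2) + Pmat (2, 2) := by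
  have h : zP ^ 2 = Pmat (2, 2) := by
    simp only [zP, pow_succ, pow_zero, one_mul, Pmat_mul_aux]
    rfl
  have h' : yP ^ 2 = Pmat (0, 2) := by
    simp only [yP, pow_succ, pow_zero, one_mul, Pmat_mul_aux]
    rfl
  rw [Bmat, h, h', xP]

instance : DecidableEq VType := fun a b => by
  cases a <;> cases b <;> first | exact isTrue rfl | exact isFalse (by simp)

/-- Torus position to Tanner vertex. -/
def fAux (p : ZMod 10 × ZMod 6) : VType × (ZMod 3 × ZMod 5) :=
  let i : ZMod 5 := ((p.1.val / 2 : ℕ) : ZMod 5)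
  let j : ZMod 3 := ((p.2.val / 2 : ℕ) : ZMod 3)
  if p.1.val % 2 = 0 then
    if p.2.val % 2 = 0 then (VType.X, (-j, -i)) else (VType.R, (-j, -i - 2))
  else
    if p.2.val % 2 = 0 then (VType.L, (-j - 1, -i)) else (VType.Z, (-j - 1, -i - 2))

/-- Tanner vertex to torus position. -/
def gAux : VType × (ZMod 3 × ZMod 5) → ZMod 10 × ZMod 6
  | (VType.X, (a, b)) => (((2 * (-b).val : ℕ) : ZMod 10), ((2 * (-a).val : ℕ) : ZMod 6))
  | (VType.R, (a, b)) => (((2 * (-b - 2).val : ℕ) : ZMod 10), ((2 * (-a).val + 1 : ℕ) : ZMod 6))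
  | (VType.L, (a, b)) => (((2 * (-b).val + 1 : ℕ) : ZMod 10), ((2 * (-a - 1).val : ℕ) : ZMod 6))
  | (VType.Z, (a, b)) =>
    (((2 * (-b - 2).val + 1 : ℕ) : ZMod 10), ((2 * (-a - 1).val + 1 : ℕ) : ZMod 6))

theorem fg_aux (u : VType × (ZMod 3 × ZMod 5)) : fAux (gAux u) = u := by
  obtain ⟨t, a, b⟩ := u
  cases t <;> revert a b <;> decide

set_option maxRecDepth 100000 in
theorem gf_aux : ∀ p, gAux (fAux p) = p := by decide

/-- The equivalence of vertex sets. -/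
def eAux : VType × (ZMod 3 × ZMod 5) ≃ ZMod 10 × ZMod 6 := ⟨gAux, fAux, fg_aux, gf_aux⟩

/-- Explicit form of `A`. -/
def aAux : Matrix (ZMod 3 × ZMod 5) (ZMod 3 × ZMod 5) (ZMod 2) := Pmat (1, 0) + Pmat (1, 4)

/-- Explicit form of `B`. -/
def bAux : Matrix (ZMod 3 × ZMod 5) (ZMod 3 × ZMod 5) (ZMod 2) :=
  Pmat (1, 0) + Pmat (0, 2) + Pmat (2, 2)

/-- Directed Tanner relation with explicit matrices. -/
def relAux (u v : VType × (ZMod 3 × ZMod 5)) : Prop :=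
    (u.1 = VType.X ∧ v.1 = VType.L ∧ aAux u.2 v.2 = 1) ∨
    (u.1 = VType.X ∧ v.1 = VType.R ∧ bAux u.2 v.2 = 1) ∨
    (u.1 = VType.Z ∧ v.1 = VType.L ∧ bAux v.2 u.2 = 1) ∨
    (u.1 = VType.Z ∧ v.1 = VType.R ∧ aAux v.2 u.2 = 1)

instance (u v : VType × (ZMod 3 × ZMod 5)) : Decidable (relAux u v) := by
  unfold relAux; infer_instance

set_option maxRecDepth 100000 in
theorem right_aux : ∀ p : ZMod 10 × ZMod 6,
    fAux ((1, 0) + p) ≠ fAux p ∧ (relAux (fAux ((1, 0) + p)) (fAux p) ∨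
      relAux (fAux p) (fAux ((1, 0) + p))) := by decide

set_option maxRecDepth 100000 in
theorem up_aux : ∀ p : ZMod 10 × ZMod 6,
    fAux ((0, 1) + p) ≠ fAux p ∧ (relAux (fAux ((0, 1) + p)) (fAux p) ∨
      relAux (fAux p) (fAux ((0, 1) + p))) := by decide

theorem adj_aux (u v : VType × (ZMod 3 × ZMod 5)) (h : u ≠ v ∧ (relAux u v ∨ relAux v u)) :
    (TannerGraph Amat Bmat).Adj u v := by
  rw [Amat_aux, Bmat_aux]
  exact h

theorem step_aux (p q : ZMod 10 × ZMod 6)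
    (h : p - q = (1, 0) ∨ p - q = (-1, 0) ∨ p - q = (0, 1) ∨ p - q = (0, -1)) :
    (TannerGraph Amat Bmat).Adj (fAux p) (fAux q) := by
  have neg : ∀ d : ZMod 10 × ZMod 6, p - q = -d → q = d + p := by
    intro d hd
    rw [← neg_sub, neg_inj] at hd
    exact sub_eq_iff_eq_add.mp hd
  rcases h with h | h | h | h
  · rw [sub_eq_iff_eq_add.mp h]
    exact adj_aux _ _ (right_aux q)
  · rw [neg (1, 0) (by rw [h]; rfl)]
    exact (adj_aux _ _ (right_aux p)).symm
  · rw [sub_eq_iff_eq_add.mp h]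
    exact adj_aux _ _ (up_aux q)
  · rw [neg (0, 1) (by rw [h]; rfl)]
    exact (adj_aux _ _ (up_aux p)).symm

/-- The Tanner graph of the weight-5 `[[30,4,5]]` trivariate bicycle code
(`l = 3`, `m = 5`, `A = x + z⁴`, `B = x + y² + z²`) has a spanning subgraph
isomorphic to the Cayley graph of `ZMod 10 × ZMod 6`, i.e. the code has a toric
layout with `μ = 5` and `λ = 3`. -/
theorem stmt17 :
    ∃ H : SimpleGraph (VType × (ZMod 3 × ZMod 5)), H ≤ TannerGraph Amat Bmat ∧
      Nonempty (H ≃g CayleyGraph 5 3) := by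
  refine ⟨(CayleyGraph 5 3).comap eAux, ?_, ⟨⟨eAux, Iff.rfl⟩⟩⟩
  intro u v h
  have h2 : gAux u ≠ gAux v ∧ _ := h
  rw [← fg_aux u, ← fg_aux v]
  rcases h2.2 with h3 | h3
  · exact step_aux _ _ h3
  · exact (step_aux _ _ h3).symm
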